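/- (Lemma 3.4.) Let k, l be integers with k ≤ l < 2k and k ≥ 1. Let G = (V, E) be a multigraph, V_H ⊆ V with distinct A, B ∈ V_H, and suppose the induced subgraph H = (V_H, E_H) satisfies the renormalizability condition with respect to A, B. Let g be a (k,l)-redundant subgraph of G that is minimal, in the sense that no proper subgraph of g is (k,l)-redundant. Then at least one of the following holds: (i) g is a subgraph of H; (ii) R(g) is a (k,l)-redundant subgraph of R(G). -/

import Mathlib

/-!  Multigraphs: finite vertex set, finite multiset of edges (unordered pairs of
distinct vertices, parallel edges allowed, loops excluded). -/

/-- A multigraph on vertex type `V`: a finite set of vertices together with a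
finite multiset of edges (unordered pairs of vertices). -/
structure MG (V : Type*) where
  verts : Finset V
  edges : Multiset (Sym2 V)

namespace MG

variable {V : Type*} [DecidableEq V]

/-- Well-formedness: no loops, and every edge joins vertices of the graph. -/
def WF (G : MG V) : Prop :=
  (∀ e ∈ G.edges, ¬ e.IsDiag) ∧ (∀ e ∈ G.edges, e ∈ G.verts.sym2)

/-- `G'` is a subgraph of `G`: vertices a subset, edges a sub-multiset, and all
edges of `G'` join vertices of `G'`. -/
def IsSubgraph (G' G : MG V) : Prop :=
  G'.verts ⊆ G.verts ∧ G'.edges ≤ G.edges ∧ ∀ e ∈ G'.edges, e ∈ G'.verts.sym2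

/-- `(k,l)`-sparsity: every subgraph with `n > 1` vertices and `m` edges
satisfies `m ≤ k n - l`. -/
def Sparse (k l : ℤ) (G : MG V) : Prop :=
  ∀ G' : MG V, G'.IsSubgraph G → 1 < G'.verts.card →
    (Multiset.card G'.edges : ℤ) ≤ k * G'.verts.card - l

/-- `(k,l)`-redundant: not `(k,l)`-sparse. -/
def Redundant (k l : ℤ) (G : MG V) : Prop := ¬ Sparse k l G

/-- `(k,l)`-tight: sparse with exactly `k|V| - l` edges. -/
def Tight (k l : ℤ) (G : MG V) : Prop :=
  Sparse k l G ∧ (Multiset.card G.edges : ℤ) = k * G.verts.card - l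

/-- `A` and `B` are `(k,l)`-rigidly connected in `G` if some `(k,l)`-tight
subgraph of `G` contains both. -/
def RigidlyConnected (k l : ℤ) (G : MG V) (A B : V) : Prop :=
  ∃ T : MG V, T.IsSubgraph G ∧ Tight k l T ∧ A ∈ T.verts ∧ B ∈ T.verts

/-- `r_AB(H)`: the maximum of `|E_h| - k |V_h|` over all `(k,l)`-sparse
subgraphs `h` of `H` containing both `A` and `B`. -/
noncomputable def rAB (k l : ℤ) (H : MG V) (A B : V) : ℤ :=
  sSup {z : ℤ | ∃ h : MG V, h.IsSubgraph H ∧ Sparse k l h ∧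
    A ∈ h.verts ∧ B ∈ h.verts ∧ z = (Multiset.card h.edges : ℤ) - k * h.verts.card}

/-- `M_AB(H) = max (r_AB(H) + 2k, 0)`. -/
noncomputable def MAB (k l : ℤ) (H : MG V) (A B : V) : ℤ :=
  max (rAB k l H A B + 2 * k) 0

/-- The subgraph of `G` induced by a set `S` of vertices. -/
def induced (G : MG V) (S : Finset V) : MG V :=
  ⟨S, G.edges.filter (· ∈ S.sym2)⟩

/-- The intersection of `g` with the subgraph induced by `VH`: vertices
`g.verts ∩ VH` and the edges of `g` with both endpoints in `VH`. -/
def inter (g : MG V) (VH : Finset V) : MG V :=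
  ⟨g.verts ∩ VH, g.edges.filter (· ∈ VH.sym2)⟩

/-- The renormalizability condition: every edge of `G` with exactly one
endpoint in `VH` is incident to `A` or `B`. -/
def RenormCond (G : MG V) (VH : Finset V) (A B : V) : Prop :=
  ∀ e ∈ G.edges, (∃ v ∈ e, v ∈ VH) → (∃ v ∈ e, v ∉ VH) → (A ∈ e ∨ B ∈ e)

/-- The renormalized graph `R(G)`: delete all edges with both endpoints in
`VH`, delete the vertices of `VH` other than `A, B`, and insert
`M_AB(H)` parallel edges between `A` and `B`, where `H` is the subgraph
induced by `VH`. -/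
noncomputable def renormG (k l : ℤ) (G : MG V) (VH : Finset V) (A B : V) : MG V :=
  ⟨(G.verts \ VH) ∪ {A, B},
   G.edges.filter (fun e => e ∉ VH.sym2) +
     Multiset.replicate (MAB k l (G.induced VH) A B).toNat s(A, B)⟩

/-- Renormalization of a subgraph `g` of `G`: the part of `g` outside `VH` is
left unchanged, and its intersection `h` with the subgraph induced by `VH` is
replaced by `M_AB(h)` parallel `A`–`B` edges if both `A` and `B` belong to `g`,
and by no edges otherwise. -/
noncomputable def renormSub (k l : ℤ) (g : MG V) (VH : Finset V) (A B : V) : MG V :=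
  ⟨(g.verts \ VH) ∪ (g.verts ∩ {A, B}),
   g.edges.filter (fun e => e ∉ VH.sym2) +
     (if A ∈ g.verts ∧ B ∈ g.verts then
        Multiset.replicate (MAB k l (g.inter VH) A B).toNat s(A, B)
      else 0)⟩

/-- The maximum cardinality of a sub-multiset `E'` of the edges of `G` such
that `(V, E')` is `(k,l)`-sparse. -/
noncomputable def maxSparseCard (k l : ℤ) (G : MG V) : ℕ :=
  sSup {n : ℕ | ∃ E' : Multiset (Sym2 V), E' ≤ G.edges ∧
    Sparse k l (⟨G.verts, E'⟩ : MG V) ∧ Multiset.card E' = n}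

/-- The number of `(k,l)`-redundant edges of `G`. -/
noncomputable def nred (k l : ℤ) (G : MG V) : ℕ :=
  Multiset.card G.edges - maxSparseCard k l G

/-- Connectivity: any two vertices are joined by a path of edges. -/
def Connected (G : MG V) : Prop :=
  ∀ a ∈ G.verts, ∀ b ∈ G.verts,
    Relation.ReflTransGen (fun x y => s(x, y) ∈ G.edges) a b

end MG

/-!
Write `exc g = |E_g| - k |V_g|`, so that sparsity of `g` says `exc g' ≤ -l` for every subgraph `g'`
with at least two vertices. Let `g' ⊆ g` violate this bound, let `h` be its intersection with `H`,
and suppose that `h` is sparse. Passing from `g'` to `R(g')` removes the contribution `exc h` and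
adds `M_AB(h) - 2k ≥ r_AB(h) ≥ exc h` if `A` and `B` both lie in `g'`, and `-k` or `0` if one or
none of them does; in these two cases `exc h` is at most `-k` or `0` as well, because `k ≤ l`. Hence
`exc g' ≤ exc R(g')`. If `R(g')` were a single vertex outside `H`, then `exc g' ≤ -2k ≤ -l`; so
`R(g')`, a subgraph of `R(g)` by monotonicity of `R`, violates the bound too. Thus `R(g)` is
redundant whenever `g` is and `g ∩ H` is not; for minimal `g` the intersection `g ∩ H` is redundant
only when it is all of `g`.
-/

namespace MG

section Excess

variable {V : Type*} {k l : ℤ} {G g g' g'' : MG V}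

/-- The quantity `|E| - k |V|` in terms of which `(k,l)`-sparsity and `r_AB` are expressed. -/
def excess (k : ℤ) (g : MG V) : ℤ :=
  Multiset.card g.edges - k * g.verts.card

theorem IsSubgraph.trans (h' : g''.IsSubgraph g') (h : g'.IsSubgraph g) : g''.IsSubgraph g :=
  ⟨h'.1.trans h.1, h'.2.1.trans h.2.1, h'.2.2⟩

theorem WF.isSubgraph_self (h : g.WF) : g.IsSubgraph g :=
  ⟨subset_rfl, le_rfl, h.2⟩

theorem WF.mono (h : G.WF) (hg : g.IsSubgraph G) : g.WF :=
  ⟨fun e he => h.1 e (Multiset.mem_of_le hg.2.1 he), hg.2.2⟩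

theorem WF.edges_eq_zero (h : g.WF) (hcard : g.verts.card ≤ 1) : g.edges = 0 := by
  refine Multiset.eq_zero_of_forall_notMem fun e he => h.1 e he ?_
  have hends := h.2 e he
  induction e with
  | h x y =>
    rw [Finset.mk_mem_sym2_iff] at hends
    exact Sym2.mk_isDiag_iff.2 (Finset.card_le_one.1 hcard x hends.1 y hends.2)

theorem WF.excess_of_card_le_one (h : g.WF) (hcard : g.verts.card ≤ 1) :
    excess k g = -(k * g.verts.card) := by
  simp [excess, h.edges_eq_zero hcard]

theorem Sparse.mono (h : Sparse k l G) (hg : g.IsSubgraph G) : Sparse k l g :=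
  fun g' hg' => h g' (hg'.trans hg)

theorem Sparse.excess_le (h : Sparse k l G) (hg : g.IsSubgraph G) (hcard : 1 < g.verts.card) :
    excess k g ≤ -l := by
  have := h g hg hcard
  unfold excess
  linarith

theorem redundant_iff_exists_excess :
    Redundant k l G ↔ ∃ g : MG V, g.IsSubgraph G ∧ 1 < g.verts.card ∧ -l < excess k g := by
  simp only [Redundant, Sparse, excess, not_forall, not_le, exists_prop]
  refine exists_congr fun g => and_congr_right fun _ => and_congr_right fun _ => ?_
  constructor <;> intro <;> linarith

theorem Sparse.excess_le_neg (h : Sparse k l g) (hWF : g.WF) (hkl : k ≤ l)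
    (hne : g.verts.Nonempty) : excess k g ≤ -k := by
  obtain hcard | hcard := (Nat.succ_le_of_lt hne.card_pos).eq_or_lt
  · simp [hWF.excess_of_card_le_one hcard.ge, ← hcard]
  · linarith [h.excess_le hWF.isSubgraph_self hcard]

end Excess

section RAB

variable {V : Type*} {k l : ℤ} {h H : MG V} {A B : V}

theorem bddAbove_rAB (k l : ℤ) (H : MG V) (hAB : A ≠ B) :
    BddAbove {z : ℤ | ∃ h : MG V, h.IsSubgraph H ∧ Sparse k l h ∧ A ∈ h.verts ∧ B ∈ h.verts ∧
      z = (Multiset.card h.edges : ℤ) - k * h.verts.card} := by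
  refine ⟨-l, ?_⟩
  rintro z ⟨h, hh, hsp, hA, hB, rfl⟩
  exact hsp.excess_le ⟨subset_rfl, le_rfl, hh.2.2⟩ (Finset.one_lt_card.2 ⟨A, hA, B, hB, hAB⟩)

theorem excess_le_rAB (hAB : A ≠ B) (hh : h.IsSubgraph H) (hsp : Sparse k l h)
    (hA : A ∈ h.verts) (hB : B ∈ h.verts) : excess k h ≤ rAB k l H A B :=
  le_csSup (bddAbove_rAB k l H hAB) ⟨h, hh, hsp, hA, hB, rfl⟩

theorem sparse_pair [DecidableEq V] (hl2k : l ≤ 2 * k) (A B : V) :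
    Sparse k l (⟨{A, B}, 0⟩ : MG V) := by
  intro g hg hcard
  have hcard_two : g.verts.card = 2 :=
    le_antisymm ((Finset.card_le_card hg.1).trans Finset.card_le_two) hcard
  rw [Multiset.le_zero.1 hg.2.1, hcard_two, Multiset.card_zero]
  push_cast
  linarith

theorem rAB_mono (hl2k : l ≤ 2 * k) (hAB : A ≠ B) (hh : h.IsSubgraph H)
    (hA : A ∈ h.verts) (hB : B ∈ h.verts) : rAB k l h A B ≤ rAB k l H A B := by
  classical
  refine csSup_le_csSup (bddAbove_rAB k l H hAB) ?_ ?_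
  · have hpair : (⟨{A, B}, 0⟩ : MG V).IsSubgraph h :=
      ⟨by simp [Finset.insert_subset_iff, hA, hB], Multiset.zero_le _, by simp⟩
    exact ⟨_, _, hpair, sparse_pair hl2k A B, by simp, by simp, rfl⟩
  · rintro z ⟨h', hh', hz⟩
    exact ⟨h', hh'.trans hh, hz⟩

theorem MAB_mono (hl2k : l ≤ 2 * k) (hAB : A ≠ B) (hh : h.IsSubgraph H)
    (hA : A ∈ h.verts) (hB : B ∈ h.verts) : MAB k l h A B ≤ MAB k l H A B :=
  max_le_max_right 0 (add_le_add_left (rAB_mono hl2k hAB hh hA hB) _)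

end RAB

section Renorm

variable {V : Type*} {k l : ℤ} {G g : MG V} {VH : Finset V} {A B : V}

theorem RenormCond.mono (h : RenormCond G VH A B) (hg : g.IsSubgraph G) : RenormCond g VH A B :=
  fun e he => h e (Multiset.mem_of_le hg.2.1 he)

theorem RenormCond.eq_or_eq (h : RenormCond g VH A B) (hA : A ∈ VH) (hB : B ∈ VH) {e : Sym2 V}
    (he : e ∈ g.edges) (heVH : e ∉ VH.sym2) {v : V} (hv : v ∈ e) (hvVH : v ∈ VH) :
    v = A ∨ v = B := by
  obtain ⟨u, hu, huVH⟩ : ∃ u ∈ e, u ∉ VH := by simpa [Finset.mem_sym2_iff] using heVH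
  have he_eq : e = s(u, v) :=
    (Sym2.mem_and_mem_iff (ne_of_mem_of_not_mem hvVH huVH).symm).1 ⟨hu, hv⟩
  have hincident := h e he ⟨v, hv, hvVH⟩ ⟨u, hu, huVH⟩
  rw [he_eq, Sym2.mem_iff, Sym2.mem_iff] at hincident
  have hAu : A ≠ u := ne_of_mem_of_not_mem hA huVH
  have hBu : B ≠ u := ne_of_mem_of_not_mem hB huVH
  tauto

variable [DecidableEq V]

theorem IsSubgraph.inter (hg : g.IsSubgraph G) (S : Finset V) :
    (g.inter S).IsSubgraph (G.inter S) := by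
  refine ⟨Finset.inter_subset_inter_right hg.1, Multiset.filter_le_filter _ hg.2.1, fun e he => ?_⟩
  obtain ⟨he, heS⟩ := Multiset.mem_filter.1 he
  exact Finset.mem_sym2_iff.2 fun v hv => Finset.mem_inter.2
    ⟨Finset.mem_sym2_iff.1 (hg.2.2 e he) v hv, Finset.mem_sym2_iff.1 heS v hv⟩

theorem WF.inter_isSubgraph (h : g.WF) (S : Finset V) : (g.inter S).IsSubgraph g :=
  ⟨Finset.inter_subset_left, Multiset.filter_le _ _, (h.isSubgraph_self.inter S).2.2⟩

theorem WF.inter_eq_self (h : g.WF) (hsub : g.verts ⊆ VH) : g.inter VH = g := by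
  simp only [inter, Finset.inter_eq_left.2 hsub,
    Multiset.filter_eq_self.2 fun e he => Finset.sym2_mono hsub (h.2 e he)]

theorem induced_eq_inter (hVH : VH ⊆ G.verts) : G.induced VH = G.inter VH := by
  simp only [induced, inter, Finset.inter_eq_right.2 hVH]

theorem renormG_eq_renormSub (hVH : VH ⊆ G.verts) (hA : A ∈ VH) (hB : B ∈ VH) :
    renormG k l G VH A B = renormSub k l G VH A B := by
  have hAB : {A, B} ⊆ G.verts := by simp [Finset.insert_subset_iff, hVH hA, hVH hB]
  simp only [renormG, renormSub, induced_eq_inter hVH, Finset.inter_eq_right.2 hAB,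
    if_pos (And.intro (hVH hA) (hVH hB))]

theorem WF.renormSub (hWF : g.WF) (k l : ℤ) (hA : A ∈ VH) (hB : B ∈ VH) (hAB : A ≠ B)
    (hren : RenormCond g VH A B) : (renormSub k l g VH A B).WF := by
  refine forall₂_and.1 fun e he => ?_
  rcases Multiset.mem_add.1 he with he | he
  · obtain ⟨he, heVH⟩ := Multiset.mem_filter.1 he
    refine ⟨hWF.1 e he, Finset.mem_sym2_iff.2 fun v hv => ?_⟩
    have hvg : v ∈ g.verts := Finset.mem_sym2_iff.1 (hWF.2 e he) v hv
    by_cases hvVH : v ∈ VH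
    · simp [MG.renormSub, hvg, hren.eq_or_eq hA hB he heVH hv hvVH]
    · simp [MG.renormSub, hvg, hvVH]
  · split_ifs at he with hboth
    · rw [Multiset.eq_of_mem_replicate he]
      simp [MG.renormSub, hboth, hAB]
    · simp at he

theorem IsSubgraph.renormSub (hg : g.IsSubgraph G) (hG : G.WF) (hl2k : l ≤ 2 * k)
    (hA : A ∈ VH) (hB : B ∈ VH) (hAB : A ≠ B) (hren : RenormCond G VH A B) :
    (renormSub k l g VH A B).IsSubgraph (renormSub k l G VH A B) := by
  refine ⟨?_, add_le_add (Multiset.filter_le_filter _ hg.2.1) ?_,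
    ((hG.mono hg).renormSub k l hA hB hAB (hren.mono hg)).2⟩
  · exact Finset.union_subset_union (Finset.sdiff_subset_sdiff hg.1 subset_rfl)
      (Finset.inter_subset_inter_right hg.1)
  · by_cases hboth : A ∈ g.verts ∧ B ∈ g.verts
    · rw [if_pos hboth, if_pos ⟨hg.1 hboth.1, hg.1 hboth.2⟩, Multiset.replicate_le_replicate]
      exact Int.toNat_le_toNat <| MAB_mono hl2k hAB (hg.inter VH)
        (Finset.mem_inter.2 ⟨hboth.1, hA⟩) (Finset.mem_inter.2 ⟨hboth.2, hB⟩)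
    · rw [if_neg hboth]
      exact Multiset.zero_le _

theorem card_verts_renormSub (k l : ℤ) (g : MG V) (hA : A ∈ VH) (hB : B ∈ VH) :
    (renormSub k l g VH A B).verts.card = (g.verts \ VH).card + (g.verts ∩ {A, B}).card := by
  have hAB : {A, B} ⊆ VH := by simp [Finset.insert_subset_iff, hA, hB]
  exact Finset.card_union_of_disjoint <|
    Finset.sdiff_disjoint.mono_right (Finset.inter_subset_right.trans hAB)

theorem excess_renormSub_add_excess_inter (k l : ℤ) (g : MG V) (hA : A ∈ VH) (hB : B ∈ VH) :
    excess k (renormSub k l g VH A B) + excess k (g.inter VH) = excess k g +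
      ((if A ∈ g.verts ∧ B ∈ g.verts then MAB k l (g.inter VH) A B else 0) -
        k * (g.verts ∩ {A, B}).card) := by
  have hedges : Multiset.card (g.edges.filter (· ∈ VH.sym2)) +
      Multiset.card (g.edges.filter (· ∉ VH.sym2)) = Multiset.card g.edges := by
    rw [← Multiset.card_add, Multiset.filter_add_not]
  have hverts : (g.verts \ VH).card + (g.inter VH).verts.card = g.verts.card :=
    Finset.card_sdiff_add_card_inter _ _
  have hinserted : (Multiset.card (if A ∈ g.verts ∧ B ∈ g.verts then
      Multiset.replicate (MAB k l (g.inter VH) A B).toNat s(A, B) else 0) : ℤ) =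
      if A ∈ g.verts ∧ B ∈ g.verts then MAB k l (g.inter VH) A B else 0 := by
    split_ifs <;> simp [MAB]
  rw [excess, excess, excess, card_verts_renormSub k l g hA hB, ← hverts, ← hedges, ← hinserted,
    renormSub, Multiset.card_add, inter]
  push_cast
  ring

theorem card_inter_pair_le_one (h : ¬ (A ∈ g.verts ∧ B ∈ g.verts)) :
    (g.verts ∩ {A, B}).card ≤ 1 := by
  rw [Finset.card_le_one]
  grind

theorem excess_inter_le (hkl : k ≤ l) (hk : 0 ≤ k) (hA : A ∈ VH) (hB : B ∈ VH) (hAB : A ≠ B)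
    (hWF : g.WF) (hsp : Sparse k l (g.inter VH)) :
    excess k (g.inter VH) ≤
      (if A ∈ g.verts ∧ B ∈ g.verts then MAB k l (g.inter VH) A B else 0) -
        k * (g.verts ∩ {A, B}).card := by
  have hWFinter : (g.inter VH).WF := hWF.mono (hWF.inter_isSubgraph VH)
  split_ifs with hboth
  · have hpair : (g.verts ∩ {A, B}).card = 2 := by
      rw [Finset.inter_eq_right.2 (by simp [Finset.insert_subset_iff, hboth]),
        Finset.card_pair hAB]
    have hr : excess k (g.inter VH) ≤ rAB k l (g.inter VH) A B :=
      excess_le_rAB hAB hWFinter.isSubgraph_self hsp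
        (Finset.mem_inter.2 ⟨hboth.1, hA⟩) (Finset.mem_inter.2 ⟨hboth.2, hB⟩)
    have hM : rAB k l (g.inter VH) A B + 2 * k ≤ MAB k l (g.inter VH) A B := le_max_left _ _
    rw [hpair]
    push_cast
    linarith
  · rcases (g.inter VH).verts.eq_empty_or_nonempty with hempty | hne
    · have hpair : g.verts ∩ {A, B} = ∅ := by
        refine Finset.subset_empty.1 (hempty ▸ Finset.inter_subset_inter_left ?_)
        simp [Finset.insert_subset_iff, hA, hB]
      simp [hWFinter.excess_of_card_le_one (k := k), hempty, hpair]
    · have hpair : k * (g.verts ∩ {A, B}).card ≤ k :=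
        mul_le_of_le_one_right hk (mod_cast card_inter_pair_le_one hboth)
      linarith [hsp.excess_le_neg hWFinter hkl hne]

theorem excess_le_excess_renormSub (hkl : k ≤ l) (hk : 0 ≤ k) (hA : A ∈ VH) (hB : B ∈ VH)
    (hAB : A ≠ B) (hWF : g.WF) (hsp : Sparse k l (g.inter VH)) :
    excess k g ≤ excess k (renormSub k l g VH A B) := by
  linarith [excess_renormSub_add_excess_inter k l g hA hB,
    excess_inter_le hkl hk hA hB hAB hWF hsp]

theorem one_lt_card_verts_renormSub (hkl : k ≤ l) (hl2k : l ≤ 2 * k) (hA : A ∈ VH) (hB : B ∈ VH)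
    (hAB : A ≠ B) (hWF : g.WF) (hren : RenormCond g VH A B) (hsp : Sparse k l (g.inter VH))
    (hout : ¬ g.verts ⊆ VH) (hcard : 1 < g.verts.card) (hexcess : -l < excess k g) :
    1 < (renormSub k l g VH A B).verts.card := by
  by_contra! hle
  have hcard_out : 0 < (g.verts \ VH).card := Finset.card_pos.2 (Finset.sdiff_nonempty.2 hout)
  have hcard_renorm := card_verts_renormSub k l g hA hB
  have hcard_split : (g.verts \ VH).card + (g.inter VH).verts.card = g.verts.card :=
    Finset.card_sdiff_add_card_inter _ _
  have hnone : (g.verts ∩ {A, B}).card = 0 := by lia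
  have hexcess_renorm : excess k (renormSub k l g VH A B) = -k := by
    rw [(hWF.renormSub k l hA hB hAB hren).excess_of_card_le_one hle,
      show (renormSub k l g VH A B).verts.card = 1 by lia, Nat.cast_one, mul_one]
  have hexcess_inter : excess k (g.inter VH) ≤ -k :=
    hsp.excess_le_neg (hWF.mono (hWF.inter_isSubgraph VH)) hkl (Finset.card_pos.1 (by lia))
  have hA_notMem : A ∉ g.verts := fun hAg => by
    simpa [Finset.card_eq_zero.1 hnone] using
      Finset.mem_inter.2 ⟨hAg, Finset.mem_insert_self A {B}⟩
  have hsum := excess_renormSub_add_excess_inter k l g hA hB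
  rw [if_neg (fun hboth => hA_notMem hboth.1), hnone] at hsum
  push_cast at hsum
  linarith

theorem Redundant.renormSub (hred : Redundant k l g) (hkl : k ≤ l) (hl2k : l ≤ 2 * k)
    (hA : A ∈ VH) (hB : B ∈ VH) (hAB : A ≠ B) (hWF : g.WF) (hren : RenormCond g VH A B)
    (hsp : Sparse k l (g.inter VH)) : Redundant k l (renormSub k l g VH A B) := by
  obtain ⟨g', hg', hcard, hexcess⟩ := redundant_iff_exists_excess.1 hred
  have hWF' : g'.WF := hWF.mono hg'
  have hsp' : Sparse k l (g'.inter VH) := hsp.mono (hg'.inter VH)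
  have hout : ¬ g'.verts ⊆ VH := fun hsub => by
    rw [hWF'.inter_eq_self hsub] at hsp'
    exact hexcess.not_ge (hsp'.excess_le hWF'.isSubgraph_self hcard)
  exact redundant_iff_exists_excess.2 ⟨_, hg'.renormSub hWF hl2k hA hB hAB hren,
    one_lt_card_verts_renormSub hkl hl2k hA hB hAB hWF' (hren.mono hg') hsp' hout hcard hexcess,
    hexcess.trans_le (excess_le_excess_renormSub hkl (by linarith) hA hB hAB hWF' hsp')⟩

theorem isSubgraph_induced_of_minimal (hG : G.WF) (hVH : VH ⊆ G.verts) (hg : g.IsSubgraph G)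
    (hmin : ∀ g' : MG V, g'.IsSubgraph g → g' ≠ g → Sparse k l g')
    (hred : Redundant k l (g.inter VH)) : g.IsSubgraph (G.induced VH) := by
  have hinter : g.inter VH = g := by
    by_contra hne
    exact hred (hmin _ ((hG.mono hg).inter_isSubgraph VH) hne)
  rw [induced_eq_inter hVH]
  exact hinter ▸ hg.inter VH

end Renorm

end MG

theorem minimal_redundant_renorm_general {V : Type*} [DecidableEq V] {k l : ℤ}
    (hkl : k ≤ l) (hl2k : l ≤ 2 * k) {G : MG V} (hWF : G.WF) {VH : Finset V} (hVH : VH ⊆ G.verts)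
    {A B : V} (hA : A ∈ VH) (hB : B ∈ VH) (hAB : A ≠ B) (hren : MG.RenormCond G VH A B)
    {g : MG V} (hg : g.IsSubgraph G) (hgred : MG.Redundant k l g) :
    (MG.renormSub k l g VH A B).IsSubgraph (MG.renormG k l G VH A B) ∧
      (MG.Redundant k l (g.inter VH) ∨ MG.Redundant k l (MG.renormSub k l g VH A B)) := by
  rw [MG.renormG_eq_renormSub hVH hA hB]
  refine ⟨hg.renormSub hWF hl2k hA hB hAB hren, or_iff_not_imp_left.2 fun hsp => ?_⟩
  exact hgred.renormSub hkl hl2k hA hB hAB (hWF.mono hg) (hren.mono hg) (not_not.1 hsp)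

/-- Lemma 3.4: let `H`, the subgraph of `G` induced by `VH`, satisfy the
renormalizability condition w.r.t. `A, B`, and let `g` be a minimal `(k,l)`-redundant
subgraph of `G`. Then either `g` is a subgraph of `H`, or `R(g)` is a `(k,l)`-redundant
subgraph of `R(G)`. -/
theorem minimal_redundant_renorm {V : Type*} [DecidableEq V] (k l : ℤ)
    (hk : 1 ≤ k) (hkl : k ≤ l) (hl2k : l < 2 * k)
    (G : MG V) (hWF : G.WF) (VH : Finset V) (hVH : VH ⊆ G.verts)
    (A B : V) (hA : A ∈ VH) (hB : B ∈ VH) (hAB : A ≠ B)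
    (hren : MG.RenormCond G VH A B)
    (g : MG V) (hg : g.IsSubgraph G) (hgred : MG.Redundant k l g)
    (hmin : ∀ g' : MG V, g'.IsSubgraph g → g' ≠ g → MG.Sparse k l g') :
    g.IsSubgraph (G.induced VH) ∨
      ((MG.renormSub k l g VH A B).IsSubgraph (MG.renormG k l G VH A B) ∧
        MG.Redundant k l (MG.renormSub k l g VH A B)) := by
  obtain ⟨hsub, hred⟩ :=
    minimal_redundant_renorm_general hkl hl2k.le hWF hVH hA hB hAB hren hg hgred
  exact hred.imp (MG.isSubgraph_induced_of_minimal hWF hVH hg hmin) (⟨hsub, ·⟩)
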